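/- There exists a rotationally symmetric Beltrami field on the closed unit ball of Euclidean 3-space tangent to its boundary: there exist λ ≠ 0 and a smooth vector field X on Euclidean 3-space such that (curl X) x = λ • X x for all x with ‖x‖ ≤ 1; ⟪X x, x⟫ = 0 for all x with ‖x‖ = 1; [Y, X] x = 0 for all x with ‖x‖ ≤ 1, where Y is the rotation field Y (x₁,x₂,x₃) = (−x₂, x₁, 0); and X does not vanish identically on the closed unit ball. -/

import Mathlib

open scoped RealInnerProductSpace

noncomputable section

/-- Euclidean 3-space. -/
abbrev E3 := EuclideanSpace ℝ (Fin 3)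

/-- The standard basis vectors e₁, e₂, e₃ (indexed by 0, 1, 2). -/
def e3 (i : Fin 3) : E3 := EuclideanSpace.single i (1 : ℝ)

/-- Build a point of `E3` from three coordinates. -/
def mk3 (a b c : ℝ) : E3 := (WithLp.equiv 2 (Fin 3 → ℝ)).symm ![a, b, c]

/-- The curl of a vector field:
`(curl X) x = (∂₂X₃ − ∂₃X₂, ∂₃X₁ − ∂₁X₃, ∂₁X₂ − ∂₂X₁)(x)`. -/
def curl3 (X : E3 → E3) (x : E3) : E3 :=
  mk3 (fderiv ℝ X x (e3 1) 2 - fderiv ℝ X x (e3 2) 1)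
      (fderiv ℝ X x (e3 2) 0 - fderiv ℝ X x (e3 0) 2)
      (fderiv ℝ X x (e3 0) 1 - fderiv ℝ X x (e3 1) 0)

/-- The cross product on `E3`. -/
def cross3 (a b : E3) : E3 :=
  mk3 (a 1 * b 2 - a 2 * b 1) (a 2 * b 0 - a 0 * b 2) (a 0 * b 1 - a 1 * b 0)

/-- A vector field is a Killing field iff its derivative is everywhere skew-adjoint. -/
def IsKilling3 (Y : E3 → E3) : Prop :=
  ∀ x v w : E3, ⟪fderiv ℝ Y x v, w⟫ + ⟪v, fderiv ℝ Y x w⟫ = 0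
/-- The rotation field `Y (x₁,x₂,x₃) = (−x₂, x₁, 0)`. -/
def Yrot : E3 → E3 := fun x => mk3 (-(x 1)) (x 0) 0

/-!
If `curl (curl T) = k² T`, then `X = k T + curl T` satisfies `curl X = k X`. We take the toroidal
field `T x = g(‖x‖²) a × x`, for which `curl (curl T) = k² T` says that `x ↦ g(‖x‖²)` solves the
radial Helmholtz equation *in dimension five*, `4 s g'' + 10 g' = -k² g` in the variable `s = ‖x‖²`.
Differentiating the radial Helmholtz equation with respect to `s` raises the dimension by two, so
the second derivative of the entire function `cos √s` solves it in dimension five. The tangency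
condition at radius `R` is `g(R²) = 0`, which amounts to `tan (k R) = k R`.
-/

open VectorField
open FormalMultilinearSeries (ofScalars ofScalarsSum ofScalars_norm ofScalarsSum_eq_tsum)
open scoped ContDiff NNReal

section PowerSeries
variable {𝕜 : Type*} [NontriviallyNormedField 𝕜] {c : ℕ → 𝕜}

theorem radius_ofScalars_eq_top_of_summable
    (hc : ∀ r : ℝ≥0, Summable fun n => ‖c n‖ * (r : ℝ) ^ n) : (ofScalars 𝕜 c).radius = ⊤ :=
  ENNReal.eq_top_of_forall_nnreal_le fun r =>
    FormalMultilinearSeries.le_radius_of_summable _ (by simpa only [ofScalars_norm] using hc r)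

theorem contDiff_ofScalarsSum [CompleteSpace 𝕜]
    (hc : ∀ r : ℝ≥0, Summable fun n => ‖c n‖ * (r : ℝ) ^ n) :
    ContDiff 𝕜 ω (ofScalarsSum (E := 𝕜) c) := by
  have hr := radius_ofScalars_eq_top_of_summable hc
  have hball := (ofScalars 𝕜 c).hasFPowerSeriesOnBall (by simp [hr])
  exact contDiff_iff_contDiffAt.2 fun x =>
    (hball.analyticAt_of_mem (by simp [hr])).contDiffAt

end PowerSeries

/-- The profiles `g` for which `x ↦ g (‖x‖ ^ 2)` solves the Helmholtz equation `Δu = -μ u` on `ℝᵈ`.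
In the variable `s = ‖x‖ ^ 2` the equation is regular at the origin; it is required for negative `s`
too, so that it can be differentiated at `s = 0`. -/
def IsHelmholtzProfile (d μ : ℝ) (g : ℝ → ℝ) : Prop :=
  ∀ s, 4 * s * deriv (deriv g) s + 2 * d * deriv g s = -μ * g s

namespace IsHelmholtzProfile

variable {d μ : ℝ} {g : ℝ → ℝ}

protected nonrec theorem deriv (hg : IsHelmholtzProfile d μ g) (hsmooth : ContDiff ℝ 3 g) :
    IsHelmholtzProfile (d + 2) μ (deriv g) := by
  intro s
  have h₁ : ContDiff ℝ 2 (deriv g) := hsmooth.deriv'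
  have h₂ : ContDiff ℝ 1 (deriv (deriv g)) := h₁.deriv'
  have d₀ := (hsmooth.differentiable (by simp) s).hasDerivAt
  have d₁ := (h₁.differentiable (by simp) s).hasDerivAt
  have d₂ := (h₂.differentiable (by simp) s).hasDerivAt
  have hlhs := (((hasDerivAt_id s).const_mul 4).fun_mul d₂).fun_add (d₁.const_mul (2 * d))
  have hrhs := d₀.const_mul (-μ)
  have := hlhs.unique (hrhs.congr_of_eventuallyEq (.of_forall hg))
  simp only [id] at this
  linear_combination this

theorem comp_mul_left (hg : IsHelmholtzProfile d μ g) (c : ℝ) :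
    IsHelmholtzProfile d (c * μ) fun s => g (c * s) := by
  intro s
  have h₁ : deriv (fun s => g (c * s)) = fun s => c * deriv g (c * s) :=
    funext fun s => deriv_comp_mul_left c g s
  rw [h₁, deriv_const_mul_field, deriv_comp_mul_left]
  simp only [smul_eq_mul]
  linear_combination c * hg (c * s)

end IsHelmholtzProfile

/-- The entire function of `s` that equals `cos √s` for `0 ≤ s`. -/
def cosSqrt : ℝ → ℝ :=
  ofScalarsSum fun n => (-1 : ℝ) ^ n / (2 * n).factorial

theorem cosSqrt_sq (t : ℝ) : cosSqrt (t ^ 2) = Real.cos t := by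
  rw [Real.cos_eq_tsum, cosSqrt, ofScalarsSum_eq_tsum]
  refine tsum_congr fun n => ?_
  rw [← pow_mul, smul_eq_mul]
  ring

theorem contDiff_cosSqrt : ContDiff ℝ ω cosSqrt := by
  refine contDiff_ofScalarsSum fun r => ?_
  refine (Real.hasSum_cosh (√r)).summable.congr fun n => ?_
  rw [pow_mul, Real.sq_sqrt r.coe_nonneg, norm_div, norm_pow, norm_neg, norm_one, one_pow,
    RCLike.norm_natCast]
  ring

theorem contDiff_deriv_cosSqrt : ContDiff ℝ ω (deriv cosSqrt) :=
  contDiff_cosSqrt.deriv'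

theorem hasDerivAt_comp_sq {𝕜 : Type*} [NontriviallyNormedField 𝕜] {f : 𝕜 → 𝕜} {f' t : 𝕜}
    (hf : HasDerivAt f f' (t ^ 2)) : HasDerivAt (fun t => f (t ^ 2)) (f' * (2 * t)) t := by
  have h : HasDerivAt (fun t : 𝕜 => t ^ 2) (2 * t) t := by simpa using hasDerivAt_pow 2 t
  exact hf.comp t h

theorem two_mul_deriv_cosSqrt_sq (t : ℝ) : 2 * t * deriv cosSqrt (t ^ 2) = -Real.sin t := by
  have hC := (contDiff_cosSqrt.differentiable (by simp) (t ^ 2)).hasDerivAt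
  have h := (hasDerivAt_comp_sq hC).unique
    ((Real.hasDerivAt_cos t).congr_of_eventuallyEq (.of_forall cosSqrt_sq))
  linear_combination h

theorem deriv_deriv_cosSqrt_sq (t : ℝ) :
    4 * t ^ 2 * deriv (deriv cosSqrt) (t ^ 2) + 2 * deriv cosSqrt (t ^ 2) = -Real.cos t := by
  have hC := (contDiff_deriv_cosSqrt.differentiable (by simp) (t ^ 2)).hasDerivAt
  have h := ((hasDerivAt_id t).const_mul 2).fun_mul (hasDerivAt_comp_sq hC)
  have := h.unique ((Real.hasDerivAt_sin t).fun_neg.congr_of_eventuallyEq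
    (.of_forall two_mul_deriv_cosSqrt_sq))
  simp only [id] at this
  linear_combination this

theorem isHelmholtzProfile_cosSqrt : IsHelmholtzProfile 1 1 cosSqrt := by
  have h₁ := contDiff_deriv_cosSqrt
  have : ContDiff ℝ ω (deriv (deriv cosSqrt)) := h₁.deriv'
  have hlhs : ContDiff ℝ ω fun s =>
      4 * s * deriv (deriv cosSqrt) s + 2 * 1 * deriv cosSqrt s := by fun_prop
  have hrhs : ContDiff ℝ ω fun s => -1 * cosSqrt s := contDiff_const.mul contDiff_cosSqrt
  refine congrFun (AnalyticOnNhd.eq_of_eventuallyEq (𝕜 := ℝ) (z₀ := 1) ?_ ?_ ?_)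
  · exact fun s _ => hlhs.contDiffAt.analyticAt
  · exact fun s _ => hrhs.contDiffAt.analyticAt
  · filter_upwards [lt_mem_nhds one_pos] with s hs
    have := deriv_deriv_cosSqrt_sq √s
    rw [← cosSqrt_sq, Real.sq_sqrt hs.le] at this
    linear_combination this

theorem exists_pos_sin_eq_mul_cos : ∃ t : ℝ, 0 < t ∧ Real.sin t = t * Real.cos t := by
  have hcont : ContinuousOn (fun t => Real.sin t - t * Real.cos t)
      (Set.Icc Real.pi (2 * Real.pi)) := by fun_prop
  have hmem : (0 : ℝ) ∈ Set.Icc (Real.sin (2 * Real.pi) - 2 * Real.pi * Real.cos (2 * Real.pi))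
      (Real.sin Real.pi - Real.pi * Real.cos Real.pi) := by
    simp [Real.pi_pos.le]
  obtain ⟨t, ht, hzero⟩ := intermediate_value_Icc' (by linarith [Real.pi_pos]) hcont hmem
  exact ⟨t, Real.pi_pos.trans_le ht.1, sub_eq_zero.1 hzero⟩

theorem deriv_deriv_cosSqrt_sq_eq_zero {t : ℝ} (ht : t ≠ 0) (h : Real.sin t = t * Real.cos t) :
    deriv (deriv cosSqrt) (t ^ 2) = 0 := by
  have hzero : (4 * t ^ 3) * deriv (deriv cosSqrt) (t ^ 2) = 0 := by
    linear_combination t * deriv_deriv_cosSqrt_sq t - two_mul_deriv_cosSqrt_sq t + h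
  exact (mul_eq_zero.1 hzero).resolve_left (by positivity)

theorem deriv_deriv_cosSqrt_zero : deriv (deriv cosSqrt) 0 = 1 / 12 := by
  have h₀ : cosSqrt 0 = 1 := by simpa using cosSqrt_sq 0
  have h₁ := isHelmholtzProfile_cosSqrt 0
  have h₂ := isHelmholtzProfile_cosSqrt.deriv (contDiff_cosSqrt.of_le le_top) 0
  linear_combination (1 / 6) * h₂ - (1 / 12) * h₁ + (1 / 12) * h₀

theorem exists_isHelmholtzProfile_five {R : ℝ} (hR : 0 < R) :
    ∃ (k : ℝ) (g : ℝ → ℝ), k ≠ 0 ∧ ContDiff ℝ ω g ∧ IsHelmholtzProfile 5 (k ^ 2) g ∧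
      g (R ^ 2) = 0 ∧ g 0 ≠ 0 := by
  obtain ⟨t, ht, htan⟩ := exists_pos_sin_eq_mul_cos
  have hg : ContDiff ℝ ω (deriv (deriv cosSqrt)) := contDiff_deriv_cosSqrt.deriv'
  have hprofile : IsHelmholtzProfile (1 + 2 + 2) 1 (deriv (deriv cosSqrt)) :=
    (isHelmholtzProfile_cosSqrt.deriv (contDiff_cosSqrt.of_le le_top)).deriv
      (contDiff_deriv_cosSqrt.of_le le_top)
  refine ⟨t / R, fun s => deriv (deriv cosSqrt) ((t / R) ^ 2 * s), by positivity,
    hg.comp (by fun_prop), ?_, ?_, ?_⟩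
  · convert hprofile.comp_mul_left ((t / R) ^ 2) using 1 <;> norm_num
  · simp only [← mul_pow]
    rw [div_mul_cancel₀ t hR.ne']
    exact deriv_deriv_cosSqrt_sq_eq_zero ht.ne' htan
  · simp [deriv_deriv_cosSqrt_zero]

theorem cross3_eq_crossProduct (a b : E3) :
    cross3 a b = WithLp.toLp 2 (crossProduct a.ofLp b.ofLp) := by
  rw [cross_apply]
  rfl

theorem cross3_self (a : E3) : cross3 a a = 0 := by
  rw [cross3_eq_crossProduct, cross_self, WithLp.toLp_zero]

theorem neg_cross3 (a b : E3) : -cross3 a b = cross3 b a := by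
  rw [cross3_eq_crossProduct, cross3_eq_crossProduct, ← WithLp.toLp_neg, cross_anticomm]

theorem cross3_smul_left (c : ℝ) (a b : E3) : cross3 (c • a) b = c • cross3 a b := by
  simp only [cross3_eq_crossProduct, WithLp.ofLp_smul, map_smul, LinearMap.smul_apply,
    WithLp.toLp_smul]

theorem cross3_smul_right (c : ℝ) (a b : E3) : cross3 a (c • b) = c • cross3 a b := by
  simp only [cross3_eq_crossProduct, WithLp.ofLp_smul, map_smul, WithLp.toLp_smul]

theorem inner_self_cross3 (a b : E3) : ⟪a, cross3 a b⟫ = 0 := by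
  rw [cross3_eq_crossProduct, EuclideanSpace.inner_eq_star_dotProduct, star_trivial,
    dotProduct_comm, dot_self_cross]

theorem inner_cross3_self (a b : E3) : ⟪b, cross3 a b⟫ = 0 := by
  rw [← neg_cross3, inner_neg_right, inner_self_cross3, neg_zero]

theorem cross3_cross3_right (u v w : E3) :
    cross3 u (cross3 v w) = ⟪u, w⟫ • v - ⟪u, v⟫ • w := by
  simp only [cross3_eq_crossProduct, cross_cross_eq_smul_sub_smul',
    EuclideanSpace.inner_eq_star_dotProduct, star_trivial, dotProduct_comm w.ofLp]
  rfl

/-- `cross3 a`, the velocity field of the rotations about the axis `a`, as a continuous linear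
map. -/
def crossCLM (a : E3) : E3 →L[ℝ] E3 :=
  LinearMap.toContinuousLinearMap <|
    (WithLp.linearEquiv 2 ℝ (Fin 3 → ℝ)).symm.toLinearMap ∘ₗ crossProduct a.ofLp ∘ₗ
      (WithLp.linearEquiv 2 ℝ (Fin 3 → ℝ)).toLinearMap

theorem coe_crossCLM (a : E3) : ⇑(crossCLM a) = cross3 a :=
  funext fun b => (cross3_eq_crossProduct a b).symm

theorem contDiff_cross3 (a : E3) {n : ℕ∞ω} : ContDiff ℝ n (cross3 a) :=
  coe_crossCLM a ▸ (crossCLM a).contDiff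

theorem differentiable_cross3 (a : E3) : Differentiable ℝ (cross3 a) :=
  coe_crossCLM a ▸ (crossCLM a).differentiable

theorem fderiv_cross3 (a x : E3) : fderiv ℝ (cross3 a) x = crossCLM a :=
  coe_crossCLM a ▸ (crossCLM a).fderiv

section Curl

variable {X Z : E3 → E3} {x : E3}

theorem curl3_add (hX : DifferentiableAt ℝ X x) (hZ : DifferentiableAt ℝ Z x) :
    curl3 (fun y => X y + Z y) x = curl3 X x + curl3 Z x := by
  ext i
  fin_cases i <;> simp [curl3, mk3, fderiv_fun_add hX hZ] <;> ring

theorem curl3_smul {f : E3 → ℝ} {f' : E3} (hf : HasGradientAt f f' x)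
    (hX : DifferentiableAt ℝ X x) :
    curl3 (fun y => f y • X y) x = f x • curl3 X x + cross3 f' (X x) := by
  have hi (i : Fin 3) : fderiv ℝ f x (e3 i) = f' i := by
    rw [hf.fderiv_apply, e3, EuclideanSpace.inner_single_right]
    simp
  ext i
  fin_cases i <;> simp [curl3, cross3, mk3, fderiv_fun_smul hf.differentiableAt hX, hi] <;> ring

theorem curl3_const_smul (c : ℝ) (hX : DifferentiableAt ℝ X x) :
    curl3 (fun y => c • X y) x = c • curl3 X x := by
  ext i
  fin_cases i <;> simp [curl3, mk3, fderiv_fun_const_smul hX] <;> ring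

theorem curl3_const (a : E3) : curl3 (fun _ => a) x = 0 := by
  ext i
  fin_cases i <;> simp [curl3, mk3]

theorem curl3_id : curl3 (fun y => y) x = 0 := by
  ext i
  fin_cases i <;> simp [curl3, mk3, e3]

theorem curl3_cross3 (a : E3) : curl3 (cross3 a) x = (2 : ℝ) • a := by
  ext i
  fin_cases i <;> simp [curl3, fderiv_cross3, coe_crossCLM, cross3, mk3, e3] <;> ring

theorem contDiff_curl3 {m n : ℕ∞ω} (hX : ContDiff ℝ n X) (hmn : m + 1 ≤ n) :
    ContDiff ℝ m (curl3 X) := by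
  have hpartial (i j : Fin 3) : ContDiff ℝ m fun x => fderiv ℝ X x (e3 i) j :=
    contDiff_euclidean.1 ((hX.fderiv_right hmn).clm_apply contDiff_const) j
  refine contDiff_euclidean.2 fun i => ?_
  fin_cases i <;> exact (hpartial _ _).sub (hpartial _ _)

end Curl

section Radial

variable {F : Type*} [NormedAddCommGroup F] [InnerProductSpace ℝ F]

theorem differentiable_inner_smul_self (a : F) : Differentiable ℝ fun y : F => ⟪a, y⟫ • y :=
  (innerSL ℝ a).differentiable.smul differentiable_id

variable [CompleteSpace F]

theorem hasGradientAt_comp_norm_sq {φ : ℝ → ℝ} {φ' : ℝ} {x : F} (hφ : HasDerivAt φ φ' (‖x‖ ^ 2)) :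
    HasGradientAt (fun y => φ (‖y‖ ^ 2)) ((2 * φ') • x) x := by
  rw [hasGradientAt_iff_hasFDerivAt]
  refine (hφ.comp_hasFDerivAt x (hasStrictFDerivAt_norm_sq x).hasFDerivAt).congr_fderiv ?_
  ext y
  simp
  ring

theorem hasGradientAt_inner_left (a x : F) : HasGradientAt (fun y => ⟪a, y⟫) a x :=
  (InnerProductSpace.toDual ℝ F a).hasFDerivAt

end Radial

section Toroidal

variable {g : ℝ → ℝ}

/-- The toroidal field with axis `a` and radial profile `g`: the rotation field about `a`, scaled
on each sphere by the value of `g` at the square of the radius. -/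
def toroidalField (g : ℝ → ℝ) (a x : E3) : E3 :=
  g (‖x‖ ^ 2) • cross3 a x

theorem contDiff_toroidalField {n : ℕ∞ω} (hg : ContDiff ℝ n g) (a : E3) :
    ContDiff ℝ n (toroidalField g a) :=
  (hg.comp (contDiff_norm_sq ℝ)).smul (contDiff_cross3 a)

theorem curl3_toroidalField (hg : Differentiable ℝ g) (a : E3) :
    curl3 (toroidalField g a) = fun x =>
      (2 * (g (‖x‖ ^ 2) + ‖x‖ ^ 2 * deriv g (‖x‖ ^ 2))) • a +
        (-2 * deriv g (‖x‖ ^ 2)) • ⟪a, x⟫ • x := by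
  funext x
  have hcurl := curl3_smul (hasGradientAt_comp_norm_sq (hg (‖x‖ ^ 2)).hasDerivAt)
    (differentiable_cross3 a x)
  rw [curl3_cross3, cross3_smul_left, cross3_cross3_right, real_inner_self_eq_norm_sq,
    real_inner_comm] at hcurl
  refine hcurl.trans ?_
  module

theorem curl3_inner_smul_self (a x : E3) : curl3 (fun y => ⟪a, y⟫ • y) x = cross3 a x := by
  rw [curl3_smul (hasGradientAt_inner_left a x) differentiableAt_fun_id, curl3_id, smul_zero,
    zero_add]

theorem curl3_radial_smul_const {φ : ℝ → ℝ} {φ' : ℝ} {x : E3} (hφ : HasDerivAt φ φ' (‖x‖ ^ 2))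
    (a : E3) : curl3 (fun y => φ (‖y‖ ^ 2) • a) x = -(2 * φ') • cross3 a x := by
  rw [curl3_smul (hasGradientAt_comp_norm_sq hφ) (differentiableAt_const a), curl3_const, smul_zero,
    zero_add, cross3_smul_left, ← neg_cross3, smul_neg, neg_smul]

theorem curl3_radial_smul_inner_smul_self {φ : ℝ → ℝ} {φ' : ℝ} {x : E3}
    (hφ : HasDerivAt φ φ' (‖x‖ ^ 2)) (a : E3) :
    curl3 (fun y => φ (‖y‖ ^ 2) • ⟪a, y⟫ • y) x = φ (‖x‖ ^ 2) • cross3 a x := by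
  rw [curl3_smul (hasGradientAt_comp_norm_sq hφ) (differentiable_inner_smul_self a x),
    curl3_inner_smul_self, cross3_smul_left, cross3_smul_right, cross3_self, smul_zero, smul_zero,
    add_zero]

theorem curl3_curl3_toroidalField (hg : Differentiable ℝ g) (hg' : Differentiable ℝ (deriv g))
    (a x : E3) :
    curl3 (curl3 (toroidalField g a)) x =
      -(4 * ‖x‖ ^ 2 * deriv (deriv g) (‖x‖ ^ 2) + 10 * deriv g (‖x‖ ^ 2)) • cross3 a x := by
  have hd := (hg (‖x‖ ^ 2)).hasDerivAt
  have hd' := (hg' (‖x‖ ^ 2)).hasDerivAt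
  have haxial := (hd.fun_add ((hasDerivAt_id' (‖x‖ ^ 2)).fun_mul hd')).const_mul 2
  have hradial := hd'.const_mul (-2)
  rw [curl3_toroidalField hg, curl3_add, curl3_radial_smul_const haxial,
    curl3_radial_smul_inner_smul_self hradial]
  · module
  · exact (hasGradientAt_comp_norm_sq haxial).differentiableAt.smul_const a
  · exact (hasGradientAt_comp_norm_sq hradial).differentiableAt.fun_smul
      (differentiable_inner_smul_self a x)

theorem IsHelmholtzProfile.curl3_curl3_toroidalField {μ : ℝ} (hprofile : IsHelmholtzProfile 5 μ g)
    (hg : Differentiable ℝ g) (hg' : Differentiable ℝ (deriv g)) (a x : E3) :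
    curl3 (curl3 (toroidalField g a)) x = μ • toroidalField g a x := by
  rw [_root_.curl3_curl3_toroidalField hg hg', toroidalField, smul_smul]
  congr 1
  linear_combination -hprofile (‖x‖ ^ 2)

end Toroidal

section Axisymmetric

theorem lieBracket_cross3_radial_smul {a x : E3} {φ : ℝ → ℝ} {X : E3 → E3}
    (hφ : DifferentiableAt ℝ φ (‖x‖ ^ 2)) (hX : DifferentiableAt ℝ X x) :
    lieBracket ℝ (cross3 a) (fun y => φ (‖y‖ ^ 2) • X y) x =
      φ (‖x‖ ^ 2) • lieBracket ℝ (cross3 a) X x := by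
  have hgrad := hasGradientAt_comp_norm_sq hφ.hasDerivAt
  rw [lieBracket_smul_right hgrad.differentiableAt hX, hgrad.fderiv_apply, real_inner_smul_left,
    inner_cross3_self, mul_zero, zero_smul, zero_add]

theorem lieBracket_cross3_const (a x : E3) : lieBracket ℝ (cross3 a) (fun _ => a) x = 0 := by
  simp [lieBracket, fderiv_cross3, coe_crossCLM, cross3_self]

theorem lieBracket_cross3_inner_smul_self (a x : E3) :
    lieBracket ℝ (cross3 a) (fun y => ⟪a, y⟫ • y) x = 0 := by
  have hgrad := hasGradientAt_inner_left a x
  have hid : lieBracket ℝ (cross3 a) (fun y => y) x = 0 := by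
    simp [lieBracket, fderiv_cross3, coe_crossCLM]
  rw [lieBracket_smul_right hgrad.differentiableAt differentiableAt_fun_id, hgrad.fderiv_apply,
    inner_self_cross3, hid, zero_smul, smul_zero, add_zero]

variable {g : ℝ → ℝ}

theorem lieBracket_cross3_toroidalField (hg : Differentiable ℝ g) (a x : E3) :
    lieBracket ℝ (cross3 a) (toroidalField g a) x = 0 := by
  have h := lieBracket_cross3_radial_smul (a := a) (hg (‖x‖ ^ 2)) (differentiable_cross3 a x)
  rwa [lieBracket_self, Pi.zero_apply, smul_zero] at h

theorem lieBracket_cross3_curl3_toroidalField (hg : Differentiable ℝ g)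
    (hg' : Differentiable ℝ (deriv g)) (a x : E3) :
    lieBracket ℝ (cross3 a) (curl3 (toroidalField g a)) x = 0 := by
  have haxial : DifferentiableAt ℝ (fun s => 2 * (g s + s * deriv g s)) (‖x‖ ^ 2) := by fun_prop
  have hradial : DifferentiableAt ℝ (fun s => -2 * deriv g s) (‖x‖ ^ 2) := by fun_prop
  have haxialField := (hasGradientAt_comp_norm_sq haxial.hasDerivAt).differentiableAt.smul_const a
  have hradialField := (hasGradientAt_comp_norm_sq hradial.hasDerivAt).differentiableAt.fun_smul
    (differentiable_inner_smul_self a x)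
  rw [curl3_toroidalField hg]
  refine (lieBracket_add_right haxialField hradialField).trans ?_
  rw [lieBracket_cross3_radial_smul haxial (differentiableAt_const a),
    lieBracket_cross3_radial_smul hradial (differentiable_inner_smul_self a x),
    lieBracket_cross3_const, lieBracket_cross3_inner_smul_self, smul_zero, smul_zero, add_zero]

end Axisymmetric

/-- The Chandrasekhar–Kendall superposition of a field `T` and its curl, which turns a solution of
`curl (curl T) = k ^ 2 • T` into a Beltrami field of eigenvalue `k`. -/
def chandrasekharKendall (k : ℝ) (T : E3 → E3) (x : E3) : E3 :=
  k • T x + curl3 T x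

section ChandrasekharKendall

variable {T : E3 → E3} {k : ℝ} {x : E3}

theorem contDiff_chandrasekharKendall {m n : ℕ∞ω} (hT : ContDiff ℝ n T) (hmn : m + 1 ≤ n) (k : ℝ) :
    ContDiff ℝ m (chandrasekharKendall k T) :=
  ((hT.of_le (le_self_add.trans hmn)).const_smul k).add (contDiff_curl3 hT hmn)

theorem curl3_chandrasekharKendall (hT : DifferentiableAt ℝ T x)
    (hcurl : DifferentiableAt ℝ (curl3 T) x) (hsq : curl3 (curl3 T) x = k ^ 2 • T x) :
    curl3 (chandrasekharKendall k T) x = k • chandrasekharKendall k T x := by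
  have hadd : curl3 (chandrasekharKendall k T) x = k • curl3 T x + curl3 (curl3 T) x := by
    rw [← curl3_const_smul k hT]
    exact curl3_add (hT.fun_const_smul k) hcurl
  rw [hadd, hsq, chandrasekharKendall]
  module

theorem lieBracket_chandrasekharKendall {Y : E3 → E3} (hT : DifferentiableAt ℝ T x)
    (hcurl : DifferentiableAt ℝ (curl3 T) x) (hYT : lieBracket ℝ Y T x = 0)
    (hYcurl : lieBracket ℝ Y (curl3 T) x = 0) :
    lieBracket ℝ Y (chandrasekharKendall k T) x = 0 := by
  refine (lieBracket_add_right (hT.const_smul k) hcurl).trans ?_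
  rw [lieBracket_const_smul_right hT, hYT, hYcurl, smul_zero, add_zero]

theorem inner_chandrasekharKendall_toroidalField_eq_zero {g : ℝ → ℝ} (hg : Differentiable ℝ g)
    (hx : g (‖x‖ ^ 2) = 0) (a : E3) :
    ⟪chandrasekharKendall k (toroidalField g a) x, x⟫ = 0 := by
  simp only [chandrasekharKendall, toroidalField, curl3_toroidalField hg, hx, inner_add_left,
    real_inner_smul_left, real_inner_self_eq_norm_sq]
  ring

theorem chandrasekharKendall_toroidalField_zero {g : ℝ → ℝ} (hg : Differentiable ℝ g) (a : E3) :
    chandrasekharKendall k (toroidalField g a) 0 = (2 * g 0) • a := by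
  have hcross : cross3 a 0 = 0 := by simpa using cross3_smul_right 0 a 0
  simp [chandrasekharKendall, toroidalField, curl3_toroidalField hg, hcross]

end ChandrasekharKendall

theorem exists_rotationally_symmetric_beltrami_on_ball_general {a : E3} (ha : a ≠ 0) {R : ℝ}
    (hR : 0 < R) :
    ∃ (k : ℝ) (X : E3 → E3), k ≠ 0 ∧ ContDiff ℝ ω X ∧
      (∀ x, curl3 X x = k • X x) ∧
      (∀ x, ‖x‖ = R → ⟪X x, x⟫ = 0) ∧
      (∀ x, lieBracket ℝ (cross3 a) X x = 0) ∧
      X 0 ≠ 0 := by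
  obtain ⟨k, g, hk, hsmooth, hprofile, hgR, hg0⟩ := exists_isHelmholtzProfile_five hR
  have hsmooth' : ContDiff ℝ ω (deriv g) := hsmooth.deriv'
  have hg : Differentiable ℝ g := hsmooth.differentiable (by simp)
  have hg' : Differentiable ℝ (deriv g) := hsmooth'.differentiable (by simp)
  have hTω : ContDiff ℝ ω (toroidalField g a) := contDiff_toroidalField hsmooth a
  have hT : Differentiable ℝ (toroidalField g a) := hTω.differentiable (by simp)
  have hcurl : Differentiable ℝ (curl3 (toroidalField g a)) :=
    (contDiff_curl3 (m := ω) hTω le_rfl).differentiable (by simp)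
  refine ⟨k, chandrasekharKendall k (toroidalField g a), hk,
    contDiff_chandrasekharKendall hTω le_rfl k, fun x => ?_, fun x hx => ?_, fun x => ?_, ?_⟩
  · exact curl3_chandrasekharKendall (hT x) (hcurl x)
      (hprofile.curl3_curl3_toroidalField hg hg' a x)
  · exact inner_chandrasekharKendall_toroidalField_eq_zero hg (hx ▸ hgR) a
  · exact lieBracket_chandrasekharKendall (hT x) (hcurl x)
      (lieBracket_cross3_toroidalField hg a x) (lieBracket_cross3_curl3_toroidalField hg hg' a x)
  · rw [chandrasekharKendall_toroidalField_zero hg]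
    exact smul_ne_zero (mul_ne_zero two_ne_zero hg0) ha

theorem Yrot_eq_cross3 : Yrot = cross3 (e3 2) := by
  ext x i
  fin_cases i <;> simp [Yrot, cross3, mk3, e3]

/-- There exists a rotationally symmetric Beltrami field on the closed unit
ball of Euclidean 3-space, tangent to its boundary: some `λ ≠ 0` and a smooth vector field
`X` with `curl X = λ • X` on the ball, `⟪X x, x⟫ = 0` on the boundary sphere,
`[Y, X] ≡ 0` on the ball for the rotation field `Y`, and `X` not identically zero on the
ball. -/
theorem exists_rotationally_symmetric_beltrami_on_ball :
    ∃ (lam : ℝ) (X : E3 → E3), lam ≠ 0 ∧ ContDiff ℝ (⊤ : ℕ∞) X ∧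
      (∀ x : E3, ‖x‖ ≤ 1 → curl3 X x = lam • X x) ∧
      (∀ x : E3, ‖x‖ = 1 → ⟪X x, x⟫ = 0) ∧
      (∀ x : E3, ‖x‖ ≤ 1 → fderiv ℝ X x (Yrot x) - fderiv ℝ Yrot x (X x) = 0) ∧
      (∃ x : E3, ‖x‖ ≤ 1 ∧ X x ≠ 0) := by
  obtain ⟨k, X, hk, hX, hcurl, htangent, hbracket, hX0⟩ :=
    exists_rotationally_symmetric_beltrami_on_ball_general (a := e3 2) (by simp [e3]) one_pos
  exact ⟨k, X, hk, hX.of_le le_top, fun x _ => hcurl x, htangent,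
    fun x _ => Yrot_eq_cross3 ▸ hbracket x, 0, by simp, hX0⟩
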